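/- Local Lipschitz continuity of the Gaussian projection: for every R ≥ 1 there exists L_G = L_G(R, n) such that for all probability measures μ₁, μ₂ ∈ P_R(R^n), d_g(Gμ₁, Gμ₂) ≤ L_G d_g(μ₁, μ₂). -/

import Mathlib

open MeasureTheory Matrix
open scoped BigOperators ENNReal

noncomputable section

namespace EnKF

/-- Points of `ℝ^n`, with Lebesgue measure as `volume`. -/
abbrev Vec (n : ℕ) := Fin n → ℝ

/-- Euclidean norm of a finitely indexed real vector. -/
def enorm {ι : Type*} [Fintype ι] (v : ι → ℝ) : ℝ := Real.sqrt (∑ i, v i ^ 2)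

/-- The weight function `g(v) = 1 + |v|²` on `ℝ^n`. -/
def gw {n : ℕ} (v : Vec n) : ℝ := 1 + ∑ i, v i ^ 2

/-- The weight function `g(u, y) = 1 + |u|² + |y|²` on `ℝ^d × ℝ^K`. -/
def gw2 {d K : ℕ} (p : Vec d × Vec K) : ℝ := 1 + (∑ i, p.1 i ^ 2) + (∑ j, p.2 j ^ 2)

/-- Weighted total-variation metric with weight `G`:
`d_G(μ₁, μ₂) = sup { |μ₁[f] − μ₂[f]| : f measurable, |f| ≤ G pointwise }`. -/
def dG {E : Type*} [MeasurableSpace E] (G : E → ℝ) (μ₁ μ₂ : Measure E) : ℝ :=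
  ⨆ f : {f : E → ℝ // Measurable f ∧ ∀ v, |f v| ≤ G v},
    |(∫ v, f.1 v ∂μ₁) - ∫ v, f.1 v ∂μ₂|

/-- Loewner order on symmetric matrices: `loe A B ↔ A ≼ B`. -/
def loe {ι : Type*} [Fintype ι] (A B : Matrix ι ι ℝ) : Prop := (B - A).PosSemidef

/-- Mean vector of a measure on `ℝ^n`. -/
def mean {n : ℕ} (μ : Measure (Vec n)) : Vec n := fun i => ∫ v, v i ∂μ

/-- Covariance matrix of a measure on `ℝ^n`. -/
def cov {n : ℕ} (μ : Measure (Vec n)) : Matrix (Fin n) (Fin n) ℝ :=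
  Matrix.of fun i j => ∫ v, (v i - mean μ i) * (v j - mean μ j) ∂μ

/-- Density of the Gaussian `N(m, S)` on `ℝ^n`. -/
def gaussDensity {n : ℕ} (m : Vec n) (S : Matrix (Fin n) (Fin n) ℝ) (x : Vec n) : ℝ :=
  (Real.sqrt ((2 * Real.pi) ^ n * S.det))⁻¹ *
    Real.exp (-(1 / 2) * ((x - m) ⬝ᵥ (S⁻¹ *ᵥ (x - m))))

/-- The (nondegenerate) Gaussian measure `N(m, S)` on `ℝ^n`. -/
def gauss {n : ℕ} (m : Vec n) (S : Matrix (Fin n) (Fin n) ℝ) : Measure (Vec n) :=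
  volume.withDensity fun x => ENNReal.ofReal (gaussDensity m S x)

/-- Gaussian projection `G` on `ℝ^n`: the Gaussian with the same mean and covariance. -/
def Gproj {n : ℕ} (μ : Measure (Vec n)) : Measure (Vec n) := gauss (mean μ) (cov μ)

variable {d K : ℕ}

/-- Mean of the first (state) marginal of a measure on `ℝ^d × ℝ^K`. -/
def meanU (π : Measure (Vec d × Vec K)) : Vec d := fun i => ∫ p, p.1 i ∂π

/-- Mean of the second (data) marginal of a measure on `ℝ^d × ℝ^K`. -/
def meanY (π : Measure (Vec d × Vec K)) : Vec K := fun j => ∫ p, p.2 j ∂π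

/-- Block `C^{uu}` of the covariance of a measure on `ℝ^d × ℝ^K`. -/
def covUU (π : Measure (Vec d × Vec K)) : Matrix (Fin d) (Fin d) ℝ :=
  Matrix.of fun i j => ∫ p, (p.1 i - meanU π i) * (p.1 j - meanU π j) ∂π

/-- Block `C^{uy}` of the covariance of a measure on `ℝ^d × ℝ^K`. -/
def covUY (π : Measure (Vec d × Vec K)) : Matrix (Fin d) (Fin K) ℝ :=
  Matrix.of fun i j => ∫ p, (p.1 i - meanU π i) * (p.2 j - meanY π j) ∂π

/-- Block `C^{yy}` of the covariance of a measure on `ℝ^d × ℝ^K`. -/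
def covYY (π : Measure (Vec d × Vec K)) : Matrix (Fin K) (Fin K) ℝ :=
  Matrix.of fun i j => ∫ p, (p.2 i - meanY π i) * (p.2 j - meanY π j) ∂π

/-- Full covariance matrix of a measure on `ℝ^d × ℝ^K`, in block form. -/
def covBlock (π : Measure (Vec d × Vec K)) : Matrix (Fin d ⊕ Fin K) (Fin d ⊕ Fin K) ℝ :=
  Matrix.fromBlocks (covUU π) (covUY π) (covUY π)ᵀ (covYY π)

/-- Density of a Gaussian on `ℝ^d × ℝ^K` with mean `(mu, my)` and covariance `S`. -/
def jointGaussDensity (mu : Vec d) (my : Vec K)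
    (S : Matrix (Fin d ⊕ Fin K) (Fin d ⊕ Fin K) ℝ) (p : Vec d × Vec K) : ℝ :=
  (Real.sqrt ((2 * Real.pi) ^ (d + K) * S.det))⁻¹ *
    Real.exp (-(1 / 2) *
      (Sum.elim (p.1 - mu) (p.2 - my) ⬝ᵥ (S⁻¹ *ᵥ Sum.elim (p.1 - mu) (p.2 - my))))

/-- Gaussian measure on `ℝ^d × ℝ^K` with mean `(mu, my)` and covariance `S`. -/
def jointGauss (mu : Vec d) (my : Vec K)
    (S : Matrix (Fin d ⊕ Fin K) (Fin d ⊕ Fin K) ℝ) : Measure (Vec d × Vec K) :=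
  volume.withDensity fun p => ENNReal.ofReal (jointGaussDensity mu my S p)

/-- Density of the Gaussian projection of a measure on `ℝ^d × ℝ^K`. -/
def gProjDensity2 (π : Measure (Vec d × Vec K)) : Vec d × Vec K → ℝ :=
  jointGaussDensity (meanU π) (meanY π) (covBlock π)

/-- Gaussian projection on `ℝ^d × ℝ^K`. -/
def Gproj2 (π : Measure (Vec d × Vec K)) : Measure (Vec d × Vec K) :=
  jointGauss (meanU π) (meanY π) (covBlock π)

/-- Prediction operator `P`: the law of `Ψ(V) + ξ`, `V ∼ μ` independent of `ξ ∼ N(0, Σ)`. -/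
def Pop (Psi : Vec d → Vec d) (Sig : Matrix (Fin d) (Fin d) ℝ)
    (μ : Measure (Vec d)) : Measure (Vec d) :=
  (μ.prod (gauss 0 Sig)).map fun p => Psi p.1 + p.2

/-- Lifting operator `Q`: the law of `(U, H(U) + η)`, `U ∼ μ` independent of `η ∼ N(0, Γ)`. -/
def Qop (H : Vec d → Vec K) (Gam : Matrix (Fin K) (Fin K) ℝ)
    (μ : Measure (Vec d)) : Measure (Vec d × Vec K) :=
  (μ.prod (gauss 0 Gam)).map fun p => (p.1, H p.1 + p.2)

/-- Lebesgue density of `Pμ`. -/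
def predDensity (Psi : Vec d → Vec d) (Sig : Matrix (Fin d) (Fin d) ℝ)
    (μ : Measure (Vec d)) (u : Vec d) : ℝ :=
  (Real.sqrt ((2 * Real.pi) ^ d * Sig.det))⁻¹ *
    ∫ v, Real.exp (-(1 / 2) * ((u - Psi v) ⬝ᵥ (Sig⁻¹ *ᵥ (u - Psi v)))) ∂μ

/-- Lebesgue density of `QPμ` on `ℝ^d × ℝ^K`. -/
def qpDensity (Psi : Vec d → Vec d) (Sig : Matrix (Fin d) (Fin d) ℝ)
    (H : Vec d → Vec K) (Gam : Matrix (Fin K) (Fin K) ℝ)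
    (μ : Measure (Vec d)) (p : Vec d × Vec K) : ℝ :=
  predDensity Psi Sig μ p.1 * gaussDensity (H p.1) Gam p.2

/-- Conditioning operator `B` applied to a (joint) density `f` and a datum `y†`:
the measure on `ℝ^d` with density `u ↦ f(u, y†) / ∫ f(U, y†) dU`. -/
def condM (f : Vec d × Vec K → ℝ) (ydag : Vec K) : Measure (Vec d) :=
  volume.withDensity fun u => ENNReal.ofReal (f (u, ydag) / ∫ U, f (U, ydag))

/-- Kalman transport operator `T`: the pushforward of `π` under
`(u, y) ↦ u + C^{uy}(π) C^{yy}(π)⁻¹ (y† − y)`. -/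
def Top (ydag : Vec K) (π : Measure (Vec d × Vec K)) : Measure (Vec d) :=
  π.map fun p => p.1 + covUY π *ᵥ ((covYY π)⁻¹ *ᵥ (ydag - p.2))

/-- Operator (spectral) norm of a real matrix. -/
def opNorm {ι : Type*} [Fintype ι] {κ : Type*} [Fintype κ] (A : Matrix ι κ ℝ) : ℝ :=
  ⨆ x : {x : κ → ℝ // ∑ i, x i ^ 2 ≤ 1}, enorm (A *ᵥ x.1)

/-- Frobenius norm of a real matrix. -/
def frobNorm {ι κ : Type*} [Fintype ι] [Fintype κ] (A : Matrix ι κ ℝ) : ℝ :=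
  Real.sqrt (∑ i, ∑ j, A i j ^ 2)

/-- Weighted norm `|x|_S = |S^{-1/2} x|`, i.e. `√(xᵀ S⁻¹ x)`. -/
def wnorm {n : ℕ} (S : Matrix (Fin n) (Fin n) ℝ) (x : Vec n) : ℝ :=
  Real.sqrt (x ⬝ᵥ (S⁻¹ *ᵥ x))

/-- The set `𝒫_R(ℝ^n)` of probability measures with `|M(μ)| ≤ R` and
`R⁻² I ≼ C(μ) ≼ R² I`. -/
def PR (n : ℕ) (R : ℝ) : Set (Measure (Vec n)) :=
  {μ | IsProbabilityMeasure μ ∧ enorm (mean μ) ≤ R ∧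
    loe ((R ^ 2)⁻¹ • 1) (cov μ) ∧ loe (cov μ) (R ^ 2 • 1)}

/-- The set `𝒫_R(ℝ^d × ℝ^K)`. -/
def PR2 (d K : ℕ) (R : ℝ) : Set (Measure (Vec d × Vec K)) :=
  {π | IsProbabilityMeasure π ∧ enorm (Sum.elim (meanU π) (meanY π)) ≤ R ∧
    loe ((R ^ 2)⁻¹ • 1) (covBlock π) ∧ loe (covBlock π) (R ^ 2 • 1)}

/-- Smallest eigenvalue of a symmetric matrix (Rayleigh quotient form). -/
def lambdaMin {ι : Type*} [Fintype ι] (A : Matrix ι ι ℝ) : ℝ :=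
  ⨅ x : {x : ι → ℝ // ∑ i, x i ^ 2 = 1}, x.1 ⬝ᵥ (A *ᵥ x.1)

/-- Kullback–Leibler divergence `KL(μ₁ ‖ μ₂) = ∫ (dμ₁/dμ₂) log (dμ₁/dμ₂) dμ₂`. -/
def kl {E : Type*} [MeasurableSpace E] (μ₁ μ₂ : Measure E) : ℝ :=
  ∫ v, ((μ₁.rnDeriv μ₂ v).toReal * Real.log (μ₁.rnDeriv μ₂ v).toReal) ∂μ₂


/-- Two-sided ellipticity: `S` is symmetric and `R⁻² I ≼ S ≼ R² I`, in terms of quadratic forms. -/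
structure IsElliptic {n : ℕ} (R : ℝ) (S : Matrix (Fin n) (Fin n) ℝ) : Prop where
  transpose_eq : Sᵀ = S
  lower : ∀ x : Vec n, x ⬝ᵥ x ≤ R ^ 2 * (x ⬝ᵥ (S *ᵥ x))
  upper : ∀ x : Vec n, x ⬝ᵥ (S *ᵥ x) ≤ R ^ 2 * (x ⬝ᵥ x)

theorem isElliptic_of_loe {n : ℕ} {R : ℝ} (hR : 0 < R) {S : Matrix (Fin n) (Fin n) ℝ}
    (h₁ : loe ((R ^ 2)⁻¹ • 1) S) (h₂ : loe S (R ^ 2 • 1)) : IsElliptic R S := by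
  refine ⟨?_, fun x => ?_, fun x => ?_⟩
  · have h := h₁.isHermitian.add
      (Matrix.isHermitian_one.smul (IsSelfAdjoint.all ((R ^ 2)⁻¹ : ℝ)))
    rw [sub_add_cancel] at h
    simpa using h.eq
  · have h := h₁.dotProduct_mulVec_nonneg x
    simp only [star_trivial, sub_mulVec, smul_mulVec, one_mulVec, dotProduct_sub,
      dotProduct_smul, smul_eq_mul] at h
    have hR2 : 0 < R ^ 2 := by positivity
    rwa [sub_nonneg, inv_mul_le_iff₀ hR2] at h
  · have h := h₂.dotProduct_mulVec_nonneg x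
    simp only [star_trivial, sub_mulVec, smul_mulVec, one_mulVec, dotProduct_sub,
      dotProduct_smul, smul_eq_mul] at h
    linarith

namespace IsElliptic

variable {n : ℕ} {R : ℝ} {S : Matrix (Fin n) (Fin n) ℝ}

theorem det_pos (hR : 0 < R) (h : IsElliptic R S) : 0 < S.det := by
  refine (Matrix.PosDef.of_dotProduct_mulVec_pos ?_ fun x hx => ?_).det_pos
  · rw [Matrix.IsHermitian, conjTranspose_eq_transpose_of_trivial, h.transpose_eq]
  · have hx' : 0 < x ⬝ᵥ x := by
      refine lt_of_le_of_ne ?_ fun h0 => hx (dotProduct_self_eq_zero.1 h0.symm)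
      exact Finset.sum_nonneg fun i _ => mul_self_nonneg (x i)
    have := h.lower x
    rw [star_trivial]
    exact pos_of_mul_pos_right (lt_of_lt_of_le hx' this) (by positivity)

theorem mulVec_inv_mulVec (hR : 0 < R) (h : IsElliptic R S) (x : Vec n) :
    S *ᵥ (S⁻¹ *ᵥ x) = x := by
  rw [mulVec_mulVec, mul_nonsing_inv _ (h.det_pos hR).ne'.isUnit, one_mulVec]

/-- The inverse is bounded by `R²` in the Euclidean operator norm. -/
theorem dotProduct_inv_mulVec_self_le (hR : 0 < R) (h : IsElliptic R S) (x : Vec n) :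
    (S⁻¹ *ᵥ x) ⬝ᵥ (S⁻¹ *ᵥ x) ≤ (R ^ 2) ^ 2 * (x ⬝ᵥ x) := by
  have h₁ := h.lower (S⁻¹ *ᵥ x)
  rw [h.mulVec_inv_mulVec hR] at h₁
  have h₂ : 0 ≤ (R ^ 2 • x - S⁻¹ *ᵥ x) ⬝ᵥ (R ^ 2 • x - S⁻¹ *ᵥ x) :=
    Finset.sum_nonneg fun i _ => mul_self_nonneg _
  simp only [sub_dotProduct, dotProduct_sub, smul_dotProduct, dotProduct_smul, smul_eq_mul] at h₂
  rw [dotProduct_comm x (S⁻¹ *ᵥ x)] at h₂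
  linarith

theorem inv (hR : 0 < R) (h : IsElliptic R S) : IsElliptic R S⁻¹ := by
  refine ⟨by rw [transpose_nonsing_inv, h.transpose_eq], fun x => ?_, fun x => ?_⟩
  · have hS := h.mulVec_inv_mulVec hR x
    set y := S⁻¹ *ᵥ x
    have h₁ := (h.lower (R ^ 2 • y - x))
    have h₀ : 0 ≤ (R ^ 2 • y - x) ⬝ᵥ (R ^ 2 • y - x) :=
      Finset.sum_nonneg fun i _ => mul_self_nonneg _
    have hyx : y ⬝ᵥ (S *ᵥ x) = x ⬝ᵥ x := by
      rw [dotProduct_mulVec, ← mulVec_transpose, h.transpose_eq, hS]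
    have h₂ : 0 ≤ (R ^ 2 • y - x) ⬝ᵥ (S *ᵥ (R ^ 2 • y - x)) :=
      nonneg_of_mul_nonneg_right (h₀.trans h₁) (by positivity)
    simp only [mulVec_sub, mulVec_smul, hS, sub_dotProduct, dotProduct_sub, smul_dotProduct,
      dotProduct_smul, smul_eq_mul, hyx] at h₂
    rw [dotProduct_comm y x] at h₂
    have h₃ := h.upper x
    have hR2 : 0 < R ^ 2 := by positivity
    refine le_of_mul_le_mul_left ?_ hR2
    linarith
  · have h₁ := h.dotProduct_inv_mulVec_self_le hR x
    have h₂ : 0 ≤ (R ^ 2 • x - S⁻¹ *ᵥ x) ⬝ᵥ (R ^ 2 • x - S⁻¹ *ᵥ x) :=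
      Finset.sum_nonneg fun i _ => mul_self_nonneg _
    simp only [sub_dotProduct, dotProduct_sub, smul_dotProduct, dotProduct_smul,
      smul_eq_mul] at h₂
    rw [dotProduct_comm (S⁻¹ *ᵥ x) x] at h₂
    have hR2 : 0 < R ^ 2 := by positivity
    refine le_of_mul_le_mul_left ?_ hR2
    linarith

theorem abs_inv_apply_le (hR : 0 < R) (h : IsElliptic R S) (i j : Fin n) :
    |S⁻¹ i j| ≤ R ^ 2 := by
  have h₁ := h.dotProduct_inv_mulVec_self_le hR (Pi.single j 1)
  have h₂ : S⁻¹ i j * S⁻¹ i j ≤ (S⁻¹ *ᵥ Pi.single j 1) ⬝ᵥ (S⁻¹ *ᵥ Pi.single j 1) := by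
    have := Finset.single_le_sum
      (f := fun k => (S⁻¹ *ᵥ Pi.single j 1) k * (S⁻¹ *ᵥ Pi.single j 1) k)
      (fun k _ => mul_self_nonneg _) (Finset.mem_univ i)
    simpa [dotProduct] using this
  refine abs_le_of_sq_le_sq ?_ (by positivity)
  rw [single_one_dotProduct, Pi.single_eq_same] at h₁
  nlinarith

theorem abs_apply_le (hR : 0 < R) (h : IsElliptic R S) (i j : Fin n) : |S i j| ≤ R ^ 2 := by
  have := (h.inv hR).abs_inv_apply_le hR i j
  rwa [nonsing_inv_nonsing_inv _ (h.det_pos hR).ne'.isUnit] at this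

theorem det_le (hR : 0 < R) (h : IsElliptic R S) : S.det ≤ n.factorial * (R ^ 2) ^ n := by
  have := Matrix.det_le (A := S) (abv := AbsoluteValue.abs) (x := R ^ 2) (h.abs_apply_le hR)
  simpa using (le_abs_self _).trans this

theorem abs_inv_sub_inv_apply_le (hR : 0 < R) {T : Matrix (Fin n) (Fin n) ℝ}
    (hS : IsElliptic R S) (hT : IsElliptic R T) {ε : ℝ} (hε : ∀ i j, |S i j - T i j| ≤ ε)
    (i j : Fin n) : |S⁻¹ i j - T⁻¹ i j| ≤ n ^ 2 * R ^ 4 * ε := by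
  have key : S⁻¹ - T⁻¹ = -(S⁻¹ * (S - T) * T⁻¹) := by
    rw [mul_sub, sub_mul, nonsing_inv_mul _ (hS.det_pos hR).ne'.isUnit, mul_assoc,
      mul_nonsing_inv _ (hT.det_pos hR).ne'.isUnit]
    simp
  rw [← Matrix.sub_apply, key, Matrix.neg_apply, abs_neg, mul_apply]
  calc |∑ k, (S⁻¹ * (S - T)) i k * T⁻¹ k j|
      ≤ ∑ k, ∑ l, R ^ 2 * ε * R ^ 2 := by
        refine (Finset.abs_sum_le_sum_abs _ _).trans (Finset.sum_le_sum fun k _ => ?_)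
        rw [mul_apply, Finset.sum_mul]
        refine (Finset.abs_sum_le_sum_abs _ _).trans (Finset.sum_le_sum fun l _ => ?_)
        have h₀ : 0 ≤ ε := (abs_nonneg _).trans (hε l k)
        rw [abs_mul, abs_mul]
        gcongr
        · exact hS.abs_inv_apply_le hR i l
        · exact hε l k
        · exact hT.abs_inv_apply_le hR k j
    _ = n ^ 2 * R ^ 4 * ε := by simp; ring

end IsElliptic

/-- The determinant is Lipschitz on matrices with bounded entries. -/
theorem exists_abs_det_sub_det_le (n : ℕ) (B : ℝ) :
    ∃ C : ℝ, 0 ≤ C ∧ ∀ S T : Matrix (Fin n) (Fin n) ℝ, (∀ i j, |S i j| ≤ B) →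
      (∀ i j, |T i j| ≤ B) → ∀ ε, 0 ≤ ε → (∀ i j, |S i j - T i j| ≤ ε) →
      |S.det - T.det| ≤ C * ε := by
  have hdet : ContDiff ℝ 1 fun M : Fin n → Fin n → ℝ => (Matrix.of M).det := by
    simp only [Matrix.det_apply, Matrix.of_apply]
    fun_prop
  obtain ⟨K, hK⟩ := hdet.contDiffOn.exists_lipschitzOnWith one_ne_zero
    (convex_closedBall (0 : Fin n → Fin n → ℝ) |B|) (isCompact_closedBall _ _)
  refine ⟨K, K.2, fun S T hS hT ε hε hST => ?_⟩
  have mem : ∀ M : Matrix (Fin n) (Fin n) ℝ, (∀ i j, |M i j| ≤ B) →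
      (fun i j => M i j) ∈ Metric.closedBall (0 : Fin n → Fin n → ℝ) |B| := by
    intro M hM
    rw [mem_closedBall_zero_iff, pi_norm_le_iff_of_nonneg (abs_nonneg B)]
    intro i
    rw [pi_norm_le_iff_of_nonneg (abs_nonneg B)]
    exact fun j => (hM i j).trans (le_abs_self B)
  have h := hK.dist_le_mul _ (mem S hS) _ (mem T hT)
  refine h.trans (mul_le_mul_of_nonneg_left ?_ K.2)
  rw [dist_pi_le_iff hε]
  intro i
  rw [dist_pi_le_iff hε]
  exact fun j => hST i j

theorem abs_inv_sqrt_sub_inv_sqrt_le {a x y : ℝ} (ha : 0 < a) (hx : a ≤ x) (hy : a ≤ y) :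
    |(√x)⁻¹ - (√y)⁻¹| ≤ (√a)⁻¹ ^ 3 * |x - y| := by
  have hr : 0 < √a := Real.sqrt_pos.2 ha
  have hs : √a ≤ √x := Real.sqrt_le_sqrt hx
  have ht : √a ≤ √y := Real.sqrt_le_sqrt hy
  have hs0 := hr.trans_le hs
  have ht0 := hr.trans_le ht
  have key : (√x)⁻¹ - (√y)⁻¹ = ((√x)⁻¹ * (√y)⁻¹ * (√x + √y)⁻¹) * (y - x) := by
    have h₁ := Real.sq_sqrt (ha.le.trans hx)
    have h₂ := Real.sq_sqrt (ha.le.trans hy)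
    rw [← h₁, ← h₂, Real.sqrt_sq hs0.le, Real.sqrt_sq ht0.le]
    field_simp
    ring
  rw [key, abs_mul, abs_sub_comm y x, abs_of_pos (by positivity)]
  calc (√x)⁻¹ * (√y)⁻¹ * (√x + √y)⁻¹ * |x - y|
      ≤ (√a)⁻¹ * (√a)⁻¹ * (√a)⁻¹ * |x - y| := by
        gcongr
        linarith
    _ = (√a)⁻¹ ^ 3 * |x - y| := by ring

theorem abs_exp_sub_exp_le {a b E : ℝ} (ha : Real.exp a ≤ E) (hb : Real.exp b ≤ E) :
    |Real.exp a - Real.exp b| ≤ E * |a - b| := by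
  wlog hab : b ≤ a generalizing a b
  · rw [abs_sub_comm, abs_sub_comm a b]
    exact this hb ha (le_of_not_ge hab)
  rw [abs_of_nonneg (sub_nonneg.2 (Real.exp_le_exp.2 hab)), abs_of_nonneg (sub_nonneg.2 hab)]
  have h₁ : Real.exp b = Real.exp a * Real.exp (b - a) := by
    rw [← Real.exp_add]; ring_nf
  have h₂ := Real.add_one_le_exp (b - a)
  calc Real.exp a - Real.exp b = Real.exp a * (1 - Real.exp (b - a)) := by rw [h₁]; ring
    _ ≤ Real.exp a * (a - b) := mul_le_mul_of_nonneg_left (by linarith) (Real.exp_pos a).le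
    _ ≤ E * (a - b) := mul_le_mul_of_nonneg_right ha (sub_nonneg.2 hab)

theorem one_le_gw {n : ℕ} (x : Vec n) : 1 ≤ gw x :=
  le_add_of_nonneg_right (Finset.sum_nonneg fun i _ => sq_nonneg (x i))

theorem sq_le_gw {n : ℕ} (x : Vec n) (i : Fin n) : 1 + x i ^ 2 ≤ gw x :=
  add_le_add_right (Finset.single_le_sum (f := fun i => x i ^ 2) (fun _ _ => sq_nonneg _)
    (Finset.mem_univ i)) 1

theorem abs_apply_le_gw {n : ℕ} (x : Vec n) (i : Fin n) : |x i| ≤ gw x := by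
  have := sq_le_gw x i
  rw [abs_le]
  constructor <;> nlinarith

/-- A centred Gaussian profile dominating all densities with parameters bounded by `R`. -/
def gaussEnv (n : ℕ) (R : ℝ) (x : Vec n) : ℝ :=
  Real.exp (1 / 2) * Real.exp (-(4 * R ^ 2)⁻¹ * ∑ i, x i ^ 2)

theorem IsElliptic.exp_le_gaussEnv {n : ℕ} {R : ℝ} (hR : 0 < R) {S : Matrix (Fin n) (Fin n) ℝ}
    (h : IsElliptic R S) {m : Vec n} (hm : ∑ i, m i ^ 2 ≤ R ^ 2) (x : Vec n) :
    Real.exp (-(1 / 2) * ((x - m) ⬝ᵥ (S⁻¹ *ᵥ (x - m)))) ≤ gaussEnv n R x := by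
  rw [gaussEnv, ← Real.exp_add, Real.exp_le_exp]
  have h₁ := (h.inv hR).lower (x - m)
  have h₂ : (∑ i, x i ^ 2) / 2 - ∑ i, m i ^ 2 ≤ (x - m) ⬝ᵥ (x - m) := by
    rw [Finset.sum_div, ← Finset.sum_sub_distrib]
    refine Finset.sum_le_sum fun i _ => ?_
    rw [Pi.sub_apply]
    nlinarith [sq_nonneg (x i - 2 * m i)]
  set q := (x - m) ⬝ᵥ (S⁻¹ *ᵥ (x - m))
  have hR2 : 0 < R ^ 2 := by positivity
  have h₃ : (4 * R ^ 2)⁻¹ * ∑ i, x i ^ 2 ≤ 1 / 2 + 1 / 2 * q := by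
    rw [inv_mul_le_iff₀ (by positivity)]
    linarith
  linarith

/-- Lipschitz dependence of the exponent on mean and precision matrix. -/
theorem abs_quadForm_sub_quadForm_le {n : ℕ} {P Q : Matrix (Fin n) (Fin n) ℝ} {u v : Vec n}
    {B T ε η : ℝ} (hB : 0 ≤ B) (hQ : ∀ i j, |Q i j| ≤ B) (hu : ∀ i, |u i| ≤ T)
    (hv : ∀ i, |v i| ≤ T) (hPQ : ∀ i j, |P i j - Q i j| ≤ η) (huv : ∀ i, |u i - v i| ≤ ε) :
    |u ⬝ᵥ (P *ᵥ u) - v ⬝ᵥ (Q *ᵥ v)| ≤ n ^ 2 * (T ^ 2 * η + 2 * (B * T * ε)) := by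
  have expand : u ⬝ᵥ (P *ᵥ u) - v ⬝ᵥ (Q *ᵥ v)
      = ∑ i, ∑ j, (u i * (P i j - Q i j) * u j + (u i - v i) * Q i j * u j
        + v i * Q i j * (u j - v j)) := by
    simp only [dotProduct, mulVec, Finset.mul_sum]
    simp only [← Finset.sum_sub_distrib]
    refine Finset.sum_congr rfl fun i _ => Finset.sum_congr rfl fun j _ => ?_
    ring
  rw [expand]
  calc _ ≤ ∑ i : Fin n, ∑ j : Fin n, (T * η * T + ε * B * T + T * B * ε) := by
        refine (Finset.abs_sum_le_sum_abs _ _).trans (Finset.sum_le_sum fun i _ => ?_)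
        refine (Finset.abs_sum_le_sum_abs _ _).trans (Finset.sum_le_sum fun j _ => ?_)
        have hT : 0 ≤ T := (abs_nonneg _).trans (hu i)
        have hη : 0 ≤ η := (abs_nonneg _).trans (hPQ i j)
        have hε : 0 ≤ ε := (abs_nonneg _).trans (huv i)
        refine (abs_add_le _ _).trans (add_le_add ((abs_add_le _ _).trans (add_le_add ?_ ?_)) ?_)
        all_goals rw [abs_mul, abs_mul]
        · gcongr
          exacts [hu i, hPQ i j, hu j]
        · gcongr
          exacts [huv i, hQ i j, hu j]
        · gcongr
          exacts [hv i, hQ i j, huv j]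
    _ = n ^ 2 * (T ^ 2 * η + 2 * (B * T * ε)) := by simp; ring

/-- Admissible Gaussian parameters: mean in the ball of radius `R`, elliptic covariance. -/
structure GaussParam {n : ℕ} (R : ℝ) (m : Vec n) (S : Matrix (Fin n) (Fin n) ℝ) : Prop where
  mean_le : ∑ i, m i ^ 2 ≤ R ^ 2
  elliptic : IsElliptic R S

theorem GaussParam.abs_mean_le {n : ℕ} {R : ℝ} (hR : 0 < R) {m : Vec n}
    {S : Matrix (Fin n) (Fin n) ℝ} (h : GaussParam R m S) (i : Fin n) : |m i| ≤ R :=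
  abs_le_of_sq_le_sq ((Finset.single_le_sum (f := fun i => m i ^ 2) (fun _ _ => sq_nonneg _)
    (Finset.mem_univ i)).trans h.mean_le) hR.le

theorem IsElliptic.le_two_pi_pow_mul_det {n : ℕ} {R : ℝ} (hR : 0 < R)
    {S : Matrix (Fin n) (Fin n) ℝ} (h : IsElliptic R S) :
    ((n.factorial : ℝ) * (R ^ 2) ^ n)⁻¹ ≤ (2 * Real.pi) ^ n * S.det := by
  have hdet := h.det_pos hR
  have h₁ := (h.inv hR).det_le hR
  rw [det_nonsing_inv, Ring.inverse_eq_inv'] at h₁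
  have h₂ : ((n.factorial : ℝ) * (R ^ 2) ^ n)⁻¹ ≤ S.det :=
    inv_le_of_inv_le₀ hdet h₁
  have h₃ : (1 : ℝ) ≤ (2 * Real.pi) ^ n := one_le_pow₀ (by linarith [Real.pi_gt_three])
  nlinarith

theorem exists_gaussDensity_le (n : ℕ) {R : ℝ} (hR : 0 < R) :
    ∃ C : ℝ, 0 ≤ C ∧ ∀ (m : Vec n) (S : Matrix (Fin n) (Fin n) ℝ), GaussParam R m S →
      ∀ x, gaussDensity m S x ≤ C * gaussEnv n R x := by
  refine ⟨(√((n.factorial : ℝ) * (R ^ 2) ^ n)⁻¹)⁻¹, by positivity, fun m S h x => ?_⟩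
  have hpos : 0 < ((n.factorial : ℝ) * (R ^ 2) ^ n)⁻¹ := by positivity
  refine mul_le_mul ?_ (h.elliptic.exp_le_gaussEnv hR h.mean_le x) (Real.exp_pos _).le
    (by positivity)
  exact inv_anti₀ (Real.sqrt_pos.2 hpos)
    (Real.sqrt_le_sqrt (h.elliptic.le_two_pi_pow_mul_det hR))

/-- Pointwise Lipschitz dependence of the Gaussian density on its parameters. -/
theorem exists_abs_gaussDensity_sub_le (n : ℕ) {R : ℝ} (hR : 1 ≤ R) :
    ∃ C : ℝ, 0 ≤ C ∧ ∀ (m₁ m₂ : Vec n) (S₁ S₂ : Matrix (Fin n) (Fin n) ℝ),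
      GaussParam R m₁ S₁ → GaussParam R m₂ S₂ → ∀ ε, 0 ≤ ε → (∀ i, |m₁ i - m₂ i| ≤ ε) →
      (∀ i j, |S₁ i j - S₂ i j| ≤ ε) → ∀ x,
      |gaussDensity m₁ S₁ x - gaussDensity m₂ S₂ x| ≤ C * ε * (gw x ^ 2 * gaussEnv n R x) := by
  have hR0 : 0 < R := by linarith
  obtain ⟨D, hD, hdet⟩ := exists_abs_det_sub_det_le n (R ^ 2)
  set a : ℝ := ((n.factorial : ℝ) * (R ^ 2) ^ n)⁻¹
  have ha : 0 < a := by positivity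
  set A : ℝ := (√a)⁻¹ ^ 3 * ((2 * Real.pi) ^ n * D) with hA
  set B : ℝ := (√a)⁻¹ * (n ^ 2 * ((1 + R) ^ 2 * (n ^ 2 * R ^ 4) + 2 * (R ^ 2 * (1 + R)))) with hB
  refine ⟨A + B, by positivity, fun m₁ m₂ S₁ S₂ h₁ h₂ ε hε hm hS x => ?_⟩
  have hg := one_le_gw x
  have hg2 : gw x ≤ gw x ^ 2 := by nlinarith
  have hE₁ := h₁.elliptic.exp_le_gaussEnv hR0 h₁.mean_le x
  have hE₂ := h₂.elliptic.exp_le_gaussEnv hR0 h₂.mean_le x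
  have hE0 : 0 ≤ gaussEnv n R x := (Real.exp_pos _).le.trans hE₁
  have hshift : ∀ (m : Vec n) (S : Matrix (Fin n) (Fin n) ℝ), GaussParam R m S →
      ∀ i, |(x - m) i| ≤ (1 + R) * gw x := by
    intro m S h i
    have hx := abs_apply_le_gw x i
    have hmi := h.abs_mean_le hR0 i
    have := abs_sub (x i) (m i)
    rw [Pi.sub_apply]
    nlinarith
  have hnorm : |(√((2 * Real.pi) ^ n * S₁.det))⁻¹ - (√((2 * Real.pi) ^ n * S₂.det))⁻¹|
      ≤ A * ε := by
    refine (abs_inv_sqrt_sub_inv_sqrt_le ha (h₁.elliptic.le_two_pi_pow_mul_det hR0)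
      (h₂.elliptic.le_two_pi_pow_mul_det hR0)).trans ?_
    rw [← mul_sub, abs_mul, abs_of_nonneg (by positivity : (0 : ℝ) ≤ (2 * Real.pi) ^ n), hA,
      mul_assoc, mul_assoc]
    gcongr
    exact hdet S₁ S₂ (h₁.elliptic.abs_apply_le hR0) (h₂.elliptic.abs_apply_le hR0) ε hε hS
  have hquad := abs_quadForm_sub_quadForm_le (by positivity)
    (h₂.elliptic.abs_inv_apply_le hR0) (hshift _ _ h₁) (hshift _ _ h₂)
    (h₁.elliptic.abs_inv_sub_inv_apply_le hR0 h₂.elliptic hS) (ε := ε)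
    (fun i => by
      rw [Pi.sub_apply, Pi.sub_apply, sub_sub_sub_cancel_left, abs_sub_comm]
      exact hm i)
  have hexp := abs_exp_sub_exp_le hE₁ hE₂
  rw [← mul_sub, abs_mul, abs_neg, abs_of_pos (by norm_num : (0 : ℝ) < 1 / 2)] at hexp
  unfold gaussDensity
  set e₁ := Real.exp (-(1 / 2) * ((x - m₁) ⬝ᵥ (S₁⁻¹ *ᵥ (x - m₁))))
  set e₂ := Real.exp (-(1 / 2) * ((x - m₂) ⬝ᵥ (S₂⁻¹ *ᵥ (x - m₂))))
  set q := |(x - m₁) ⬝ᵥ (S₁⁻¹ *ᵥ (x - m₁)) - (x - m₂) ⬝ᵥ (S₂⁻¹ *ᵥ (x - m₂))|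
  set c₁ := (√((2 * Real.pi) ^ n * S₁.det))⁻¹
  set c₂ := (√((2 * Real.pi) ^ n * S₂.det))⁻¹
  have hc₂0 : 0 ≤ c₂ := by positivity
  have hc₂a : c₂ ≤ (√a)⁻¹ := inv_anti₀ (Real.sqrt_pos.2 ha)
    (Real.sqrt_le_sqrt (h₂.elliptic.le_two_pi_pow_mul_det hR0))
  have hq : 1 / 2 * q ≤
      (n ^ 2 * ((1 + R) ^ 2 * (n ^ 2 * R ^ 4) + 2 * (R ^ 2 * (1 + R)))) * ε * gw x ^ 2 := by
    calc 1 / 2 * q ≤ q := by linarith [abs_nonneg ((x - m₁) ⬝ᵥ (S₁⁻¹ *ᵥ (x - m₁))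
          - (x - m₂) ⬝ᵥ (S₂⁻¹ *ᵥ (x - m₂)))]
      _ ≤ _ := hquad
      _ = n ^ 2 * ((1 + R) ^ 2 * (n ^ 2 * R ^ 4) * ε * gw x ^ 2
            + 2 * (R ^ 2 * (1 + R)) * ε * gw x) := by ring
      _ ≤ n ^ 2 * ((1 + R) ^ 2 * (n ^ 2 * R ^ 4) * ε * gw x ^ 2
            + 2 * (R ^ 2 * (1 + R)) * ε * gw x ^ 2) := by gcongr
      _ = _ := by ring
  calc |c₁ * e₁ - c₂ * e₂| = |(c₁ - c₂) * e₁ + c₂ * (e₁ - e₂)| := by ring_nf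
    _ ≤ |c₁ - c₂| * e₁ + c₂ * |e₁ - e₂| := by
        refine (abs_add_le _ _).trans_eq ?_
        rw [abs_mul, abs_mul, abs_of_nonneg hc₂0, abs_of_pos (Real.exp_pos _)]
    _ ≤ A * ε * (gw x ^ 2 * gaussEnv n R x) + (√a)⁻¹ * (gaussEnv n R x *
          ((n ^ 2 * ((1 + R) ^ 2 * (n ^ 2 * R ^ 4) + 2 * (R ^ 2 * (1 + R)))) * ε
            * gw x ^ 2)) := by
        refine add_le_add ?_ ?_
        · refine mul_le_mul hnorm (hE₁.trans ?_) (Real.exp_pos _).le (by positivity)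
          exact le_mul_of_one_le_left hE0 (hg.trans hg2)
        · refine mul_le_mul hc₂a (hexp.trans ?_) (abs_nonneg _) (by positivity)
          gcongr
    _ = (A + B) * ε * (gw x ^ 2 * gaussEnv n R x) := by rw [hB]; ring

theorem measurable_gw {n : ℕ} : Measurable (gw : Vec n → ℝ) := by
  unfold gw
  fun_prop

theorem continuous_gaussDensity {n : ℕ} (m : Vec n) (S : Matrix (Fin n) (Fin n) ℝ) :
    Continuous (gaussDensity m S) := by
  unfold gaussDensity
  simp only [dotProduct, mulVec]
  fun_prop

theorem gaussDensity_nonneg {n : ℕ} (m : Vec n) (S : Matrix (Fin n) (Fin n) ℝ) (x : Vec n) :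
    0 ≤ gaussDensity m S x := by
  unfold gaussDensity
  positivity

theorem gaussEnv_nonneg (n : ℕ) (R : ℝ) (x : Vec n) : 0 ≤ gaussEnv n R x := by
  unfold gaussEnv
  positivity

theorem integrable_exp_neg_mul_sum_sq {n : ℕ} {b : ℝ} (hb : 0 < b) :
    Integrable fun x : Vec n => Real.exp (-b * ∑ i, x i ^ 2) := by
  have h := Integrable.fintype_prod (ι := Fin n) (f := fun _ t => Real.exp (-b * t ^ 2))
    (μ := fun _ => volume) fun _ => integrable_exp_neg_mul_sq hb
  simp only [← Real.exp_sum, ← Finset.mul_sum] at h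
  exact h

theorem integrable_gw_pow_mul_gaussEnv (n : ℕ) {R : ℝ} (hR : 1 ≤ R) :
    Integrable fun x : Vec n => gw x ^ 3 * gaussEnv n R x := by
  set b : ℝ := (24 * R ^ 2)⁻¹ with hb
  have hb0 : 0 < b := by positivity
  have hb1 : b ≤ 1 := inv_le_one_of_one_le₀ (by nlinarith)
  refine ((integrable_exp_neg_mul_sum_sq (n := n) (by positivity : 0 < 3 * b)).const_mul
    ((b⁻¹) ^ 3 * Real.exp (1 / 2))).mono' ?_ (ae_of_all _ fun x => ?_)
  · unfold gaussEnv
    have := measurable_gw (n := n)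
    exact Measurable.aestronglyMeasurable (by fun_prop)
  · have hs : 0 ≤ ∑ i, x i ^ 2 := Finset.sum_nonneg fun i _ => sq_nonneg (x i)
    have hg := one_le_gw x
    rw [Real.norm_of_nonneg (mul_nonneg (by positivity) (gaussEnv_nonneg n R x))]
    have h₁ : gw x ≤ b⁻¹ * Real.exp (b * ∑ i, x i ^ 2) := by
      rw [le_inv_mul_iff₀ hb0, gw]
      have := Real.add_one_le_exp (b * ∑ i, x i ^ 2)
      linarith
    calc gw x ^ 3 * gaussEnv n R x
        ≤ (b⁻¹ * Real.exp (b * ∑ i, x i ^ 2)) ^ 3 * gaussEnv n R x := by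
          gcongr
          exact gaussEnv_nonneg n R x
      _ = b⁻¹ ^ 3 * Real.exp (1 / 2) * (Real.exp (3 * (b * ∑ i, x i ^ 2)) *
            Real.exp (-(4 * R ^ 2)⁻¹ * ∑ i, x i ^ 2)) := by
          rw [gaussEnv, mul_pow, ← Real.exp_nat_mul]
          push_cast
          ring
      _ = b⁻¹ ^ 3 * Real.exp (1 / 2) * Real.exp (-(3 * b) * ∑ i, x i ^ 2) := by
          rw [← Real.exp_add]
          congr 2
          have : (4 * R ^ 2)⁻¹ = 6 * b := by
            rw [hb]
            field_simp
            norm_num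
          rw [this]
          ring

theorem integral_gauss {n : ℕ} (m : Vec n) (S : Matrix (Fin n) (Fin n) ℝ) (f : Vec n → ℝ) :
    ∫ x, f x ∂gauss m S = ∫ x, gaussDensity m S x * f x := by
  rw [gauss, integral_withDensity_eq_integral_toReal_smul
    (continuous_gaussDensity m S).measurable.ennreal_ofReal
    (ae_of_all _ fun _ => ENNReal.ofReal_lt_top)]
  simp only [ENNReal.toReal_ofReal (gaussDensity_nonneg m S _), smul_eq_mul]

/-- Lipschitz dependence of the Gaussian measure on its parameters, in weighted total variation. -/
theorem exists_dG_gauss_le (n : ℕ) {R : ℝ} (hR : 1 ≤ R) :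
    ∃ C : ℝ, 0 ≤ C ∧ ∀ (m₁ m₂ : Vec n) (S₁ S₂ : Matrix (Fin n) (Fin n) ℝ),
      GaussParam R m₁ S₁ → GaussParam R m₂ S₂ → ∀ ε, 0 ≤ ε → (∀ i, |m₁ i - m₂ i| ≤ ε) →
      (∀ i j, |S₁ i j - S₂ i j| ≤ ε) → dG gw (gauss m₁ S₁) (gauss m₂ S₂) ≤ C * ε := by
  obtain ⟨A, hA, hdens⟩ := exists_gaussDensity_le n (zero_lt_one.trans_le hR)
  obtain ⟨B, hB, hdiff⟩ := exists_abs_gaussDensity_sub_le n hR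
  have hint := integrable_gw_pow_mul_gaussEnv n hR
  have hI : 0 ≤ ∫ x : Vec n, gw x ^ 3 * gaussEnv n R x := integral_nonneg fun x =>
    mul_nonneg (pow_nonneg (zero_le_one.trans (one_le_gw x)) 3) (gaussEnv_nonneg n R x)
  refine ⟨B * ∫ x : Vec n, gw x ^ 3 * gaussEnv n R x, by positivity,
    fun m₁ m₂ S₁ S₂ h₁ h₂ ε hε hm hS => ?_⟩
  have : Nonempty {f : Vec n → ℝ // Measurable f ∧ ∀ v, |f v| ≤ gw v} :=
    ⟨⟨gw, measurable_gw, fun v => (abs_of_nonneg (zero_le_one.trans (one_le_gw v))).le⟩⟩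
  refine ciSup_le fun ⟨f, hf, hfg⟩ => ?_
  have integrable : ∀ (m : Vec n) (S : Matrix (Fin n) (Fin n) ℝ), GaussParam R m S →
      Integrable fun x => gaussDensity m S x * f x := by
    intro m S h
    refine (hint.const_mul A).mono'
      ((continuous_gaussDensity m S).measurable.mul hf).aestronglyMeasurable
      (ae_of_all _ fun x => ?_)
    rw [Real.norm_eq_abs, abs_mul, abs_of_nonneg (gaussDensity_nonneg m S x)]
    calc gaussDensity m S x * |f x| ≤ (A * gaussEnv n R x) * gw x ^ 3 := by
          refine mul_le_mul (hdens m S h x) ((hfg x).trans ?_) (abs_nonneg _)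
            (mul_nonneg hA (gaussEnv_nonneg n R x))
          exact le_self_pow₀ (one_le_gw x) (by norm_num)
      _ = _ := by ring
  simp only [integral_gauss]
  rw [← integral_sub (integrable _ _ h₁) (integrable _ _ h₂), ← Real.norm_eq_abs]
  calc _ ≤ ∫ x, B * ε * (gw x ^ 3 * gaussEnv n R x) := by
        refine norm_integral_le_of_norm_le (hint.const_mul _) (ae_of_all _ fun x => ?_)
        rw [← sub_mul, Real.norm_eq_abs, abs_mul]
        calc _ ≤ B * ε * (gw x ^ 2 * gaussEnv n R x) * gw x :=
              mul_le_mul (hdiff m₁ m₂ S₁ S₂ h₁ h₂ ε hε hm hS x) (hfg x) (abs_nonneg _)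
                (mul_nonneg (by positivity) (mul_nonneg (by positivity) (gaussEnv_nonneg n R x)))
          _ = _ := by ring
    _ = _ := by rw [integral_const_mul]; ring

theorem gaussParam_of_mem_PR {n : ℕ} {R : ℝ} (hR : 0 < R) {μ : Measure (Vec n)}
    (hμ : μ ∈ PR n R) : GaussParam R (mean μ) (cov μ) :=
  ⟨(Real.sqrt_le_left hR.le).1 hμ.2.1, isElliptic_of_loe hR hμ.2.2.1 hμ.2.2.2⟩

/-- A positive lower bound on the covariance forces finite second moments. -/
theorem integrable_gw_of_mem_PR {n : ℕ} {R : ℝ} (hR : 0 < R) {μ : Measure (Vec n)}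
    (hμ : μ ∈ PR n R) : Integrable gw μ := by
  have := hμ.1
  refine (integrable_const 1).add (integrable_finsetSum _ fun i _ => ?_)
  have hcov : cov μ i i ≠ 0 := by
    intro h0
    have h := (gaussParam_of_mem_PR hR hμ).elliptic.lower (Pi.single i 1)
    simp [h0] at h
    linarith
  have hint : Integrable (fun v : Vec n => (v i - mean μ i) * (v i - mean μ i)) μ := by
    by_contra h
    exact hcov (integral_undef h)
  refine ((hint.const_mul 2).add (integrable_const (2 * mean μ i ^ 2))).mono'
    (Measurable.aestronglyMeasurable (by fun_prop)) (ae_of_all _ fun v => ?_)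
  rw [Real.norm_of_nonneg (sq_nonneg _), Pi.add_apply]
  nlinarith [sq_nonneg (v i - 2 * mean μ i)]

theorem integrable_of_abs_le_gw {n : ℕ} {μ : Measure (Vec n)} (hμ : Integrable gw μ)
    {f : Vec n → ℝ} (hf : Measurable f) (hfg : ∀ v, |f v| ≤ gw v) : Integrable f μ :=
  hμ.mono' hf.aestronglyMeasurable (ae_of_all _ hfg)

theorem abs_integral_sub_le_dG {n : ℕ} {μ₁ μ₂ : Measure (Vec n)} (h₁ : Integrable gw μ₁)
    (h₂ : Integrable gw μ₂) {f : Vec n → ℝ} (hf : Measurable f) (hfg : ∀ v, |f v| ≤ gw v) :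
    |∫ v, f v ∂μ₁ - ∫ v, f v ∂μ₂| ≤ dG gw μ₁ μ₂ := by
  refine le_ciSup (f := fun f : {f : Vec n → ℝ // Measurable f ∧ ∀ v, |f v| ≤ gw v} =>
    |(∫ v, f.1 v ∂μ₁) - ∫ v, f.1 v ∂μ₂|) ?_ ⟨f, hf, hfg⟩
  refine ⟨∫ v, gw v ∂μ₁ + ∫ v, gw v ∂μ₂, ?_⟩
  rintro _ ⟨⟨k, _, hkg⟩, rfl⟩
  refine (abs_sub _ _).trans (add_le_add ?_ ?_)
  · exact norm_integral_le_of_norm_le (f := k) h₁ (ae_of_all _ hkg)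
  · exact norm_integral_le_of_norm_le (f := k) h₂ (ae_of_all _ hkg)

theorem abs_mul_le_gw {n : ℕ} (v : Vec n) (i j : Fin n) : |v i * v j| ≤ gw v := by
  have hi := sq_le_gw v i
  have hj := sq_le_gw v j
  rw [abs_le]
  constructor <;> nlinarith [sq_nonneg (v i + v j), sq_nonneg (v i - v j)]

theorem cov_apply_eq {n : ℕ} {μ : Measure (Vec n)} [IsProbabilityMeasure μ]
    (hμ : Integrable gw μ) (i j : Fin n) :
    cov μ i j = ∫ v, v i * v j ∂μ - mean μ i * mean μ j := by
  have hi : ∀ i, Integrable (fun v : Vec n => v i) μ := fun i =>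
    integrable_of_abs_le_gw hμ (by fun_prop) fun v => abs_apply_le_gw v i
  have hij : Integrable (fun v : Vec n => v i * v j) μ :=
    integrable_of_abs_le_gw hμ (by fun_prop) fun v => abs_mul_le_gw v i j
  have expand : ∀ v : Vec n, (v i - mean μ i) * (v j - mean μ j)
      = v i * v j - mean μ j * v i - mean μ i * v j + mean μ i * mean μ j := fun v => by ring
  simp only [cov, Matrix.of_apply, expand]
  have hmi := (hi i).const_mul (mean μ j)
  have hmj := (hi j).const_mul (mean μ i)
  rw [integral_add (by fun_prop) (by fun_prop), integral_sub (by fun_prop) hmj,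
    integral_sub hij hmi, integral_const_mul, integral_const_mul]
  simp only [integral_const, probReal_univ, one_smul]
  change _ - mean μ j * mean μ i - mean μ i * mean μ j + _ = _
  ring

/-- **Local Lipschitz continuity of the Gaussian projection** (Lemma A.11). -/
theorem Gproj_locally_lipschitz
    (n : ℕ) (R : ℝ) (hR : 1 ≤ R) :
    ∃ L : ℝ, 0 < L ∧
      ∀ μ₁ μ₂ : Measure (Vec n), μ₁ ∈ PR n R → μ₂ ∈ PR n R →
        dG gw (Gproj μ₁) (Gproj μ₂) ≤ L * dG gw μ₁ μ₂ := by
  have hR0 : 0 < R := zero_lt_one.trans_le hR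
  obtain ⟨C, hC, hgauss⟩ := exists_dG_gauss_le n hR
  refine ⟨C * (1 + 2 * R) + 1, by positivity, fun μ₁ μ₂ h₁ h₂ => ?_⟩
  have hp₁ := gaussParam_of_mem_PR hR0 h₁
  have hp₂ := gaussParam_of_mem_PR hR0 h₂
  have hi₁ := integrable_gw_of_mem_PR hR0 h₁
  have hi₂ := integrable_gw_of_mem_PR hR0 h₂
  have := h₁.1
  have := h₂.1
  set δ := dG gw μ₁ μ₂ with hδ
  have hδ0 : 0 ≤ δ := Real.iSup_nonneg fun _ => abs_nonneg _
  have hmean : ∀ i, |mean μ₁ i - mean μ₂ i| ≤ δ := fun i =>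
    abs_integral_sub_le_dG hi₁ hi₂ (f := fun v => v i) (by fun_prop)
      fun v => abs_apply_le_gw v i
  have hcov : ∀ i j, |cov μ₁ i j - cov μ₂ i j| ≤ (1 + 2 * R) * δ := by
    intro i j
    rw [cov_apply_eq hi₁, cov_apply_eq hi₂]
    have hij := abs_integral_sub_le_dG hi₁ hi₂ (f := fun v => v i * v j) (by fun_prop)
      fun v => abs_mul_le_gw v i j
    rw [← hδ] at hij
    set s := ∫ v, v i * v j ∂μ₁
    set t := ∫ v, v i * v j ∂μ₂
    calc |s - mean μ₁ i * mean μ₁ j - (t - mean μ₂ i * mean μ₂ j)|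
        = |(s - t) + (-(mean μ₁ i * (mean μ₁ j - mean μ₂ j))
            + -((mean μ₁ i - mean μ₂ i) * mean μ₂ j))| := by ring_nf
      _ ≤ |s - t| + (|mean μ₁ i| * |mean μ₁ j - mean μ₂ j|
            + |mean μ₁ i - mean μ₂ i| * |mean μ₂ j|) := by
          refine (abs_add_le _ _).trans (add_le_add_right ((abs_add_le _ _).trans_eq ?_) _)
          rw [abs_neg, abs_neg, abs_mul, abs_mul]
      _ ≤ δ + (R * δ + δ * R) := by
          gcongr
          exacts [hp₁.abs_mean_le hR0 i, hmean j, hmean i, hp₂.abs_mean_le hR0 j]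
      _ = (1 + 2 * R) * δ := by ring
  have h := hgauss _ _ _ _ hp₁ hp₂ ((1 + 2 * R) * δ) (by positivity)
    (fun i => (hmean i).trans (by nlinarith)) hcov
  calc dG gw (Gproj μ₁) (Gproj μ₂) ≤ C * ((1 + 2 * R) * δ) := h
    _ ≤ (C * (1 + 2 * R) + 1) * δ := by linarith

end EnKF
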